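/- arXiv:2312.08421 — 2 statements merged into one kernel-verified Lean document; each statement's English description precedes it below -/
import Mathlib

section
/- Let K be an algebraically closed field of characteristic zero and let B be a finitely generated commutative K-algebra that is an integral domain and admits a nonzero locally nilpotent derivation. Set A = B[u], the polynomial ring in one variable over B. If HD*(A) ≠ A, then HD*(A) is not a finitely generated K-algebra. -/
/-!
Write `A = B[u]` and `R = HD*(A)`. The proof shows that if `R` is finitely generated, then `u ∈ R`
and `B ⊆ R`, so `R = A`.

Let `D` be a nonzero LND of `B` and choose `b` with `f = D b ≠ 0` and `D f = 0`. The derivation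
`∂_u - n u^(n-1) D` of `A` is locally nilpotent with slice `u`, and it kills `b + f u^n`. The case
`D = 0` gives `B ⊆ R`; hence `f u^n ∈ R` for all `n`
(`C_mem_HDStar`, `C_mul_X_pow_mem_HDStar`). So `u` is almost integral over `R`, and
if `R` is finitely generated, hence Noetherian, then `u` is integral over `R`.

On the other hand `R` is stable under all automorphisms of `A` (`map_mem_HDStar`). Stability under
`u ↦ c u` for `c ∈ Kˣ` makes `R` a graded subalgebra (`C_coeff_mul_X_pow_mem_HDStar`), and
stability under `u ↦ u + c` gives `a u^(n+1) ∈ R → a u ∈ R`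
(`C_mul_X_mem_HDStar_of_C_mul_X_pow`). Taking the coefficient of `u^n` in a monic equation of
degree `n` for `u` over `R` writes `1` as a sum of elements `a ∈ B` with `a u ∈ R`. Hence `u ∈ R`
(`X_mem_HDStar_of_isIntegral`).
-/

/-- A K-derivation is locally nilpotent (an LND) if for every element `a`
there exists `n ≥ 1` with `D^[n] a = 0`. -/
def IsLND {K A : Type*} [CommRing K] [CommRing A] [Algebra K A]
    (D : Derivation K A A) : Prop :=
  ∀ a : A, ∃ n : ℕ, 1 ≤ n ∧ (⇑D)^[n] a = 0

/-- The modified Derksen invariant `HD*(A)`: the K-subalgebra of `A` generated by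
the union of the kernels of all LNDs of `A` that possess a slice. -/
def HDStar (K A : Type*) [CommRing K] [CommRing A] [Algebra K A] : Subalgebra K A :=
  Algebra.adjoin K {a : A | ∃ D : Derivation K A A, IsLND D ∧ (∃ s : A, D s = 1) ∧ D a = 0}

open Polynomial

/-- The subalgebra of elements killed by some power of `D`. -/
def nilSubalgebra {K A : Type*} [CommRing K] [CommRing A] [Algebra K A]
    (D : Derivation K A A) : Subalgebra K A where
  carrier := {a | ∃ n : ℕ, (⇑D)^[n] a = 0}
  mul_mem' := by
    have key : ∀ N n k : ℕ, n + k = N → ∀ a b : A, (⇑D)^[n] a = 0 → (⇑D)^[k] b = 0 →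
        (⇑D)^[N] (a * b) = 0 := by
      intro N
      induction N with
      | zero =>
        intro n k h a b ha hb
        obtain rfl : n = 0 := by omega
        simp_all
      | succ N ih =>
        intro n k h a b ha hb
        rw [Function.iterate_succ_apply, D.leibniz, iterate_map_add]
        have h1 : (⇑D)^[N] (a • D b) = 0 := by
          rcases k with _ | k
          · simp_all
          · exact ih n k (by omega) a (D b) ha hb
        have h2 : (⇑D)^[N] (b • D a) = 0 := by
          rcases n with _ | n
          · simp_all
          · exact ih k n (by omega) b (D a) hb ha
        rw [h1, h2, add_zero]
    rintro a b ⟨n, hn⟩ ⟨k, hk⟩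
    exact ⟨n + k, key _ n k rfl a b hn hk⟩
  add_mem' := by
    rintro a b ⟨n, hn⟩ ⟨k, hk⟩
    refine ⟨n + k, ?_⟩
    rw [iterate_map_add, add_comm n k, Function.iterate_add_apply, hn, add_comm k n,
      Function.iterate_add_apply, hk]
    simp
  algebraMap_mem' r := ⟨1, by simp⟩

theorem isLND_of_nilSubalgebra_eq_top {K A : Type*} [CommRing K] [CommRing A] [Algebra K A]
    {D : Derivation K A A} (h : nilSubalgebra D = ⊤) : IsLND D := by
  intro a
  obtain ⟨n, hn⟩ : a ∈ nilSubalgebra D := h ▸ Algebra.mem_top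
  exact ⟨n + 1, by omega, by rw [Function.iterate_succ_apply', hn, map_zero]⟩

theorem mem_nilSubalgebra_of_apply_mem {K A : Type*} [CommRing K] [CommRing A] [Algebra K A]
    {D : Derivation K A A} {a : A} (h : D a ∈ nilSubalgebra D) : a ∈ nilSubalgebra D := by
  obtain ⟨n, hn⟩ := h
  exact ⟨n + 1, hn⟩

section Polynomial

variable {K B : Type*} [CommRing K] [CommRing B] [Algebra K B]

/-- The coefficientwise extension of a derivation `D` of `B` to `B[u]`, sending `u` to `0`. -/
noncomputable def extendDer (D : Derivation K B B) : Derivation K B[X] B[X] :=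
  (PolynomialModule.equivPolynomialSelf (R := B)).toLinearMap.compDer D.mapCoeffs

theorem extendDer_C (D : Derivation K B B) (b : B) : extendDer D (C b) = C (D b) := by
  simp [extendDer, Derivation.mapCoeffs_C]

theorem extendDer_X (D : Derivation K B B) : extendDer D X = 0 := by
  simp [extendDer, Derivation.mapCoeffs_X]

/-- The derivation `∂_u - q'(u) D` of `B[u]`, which is the conjugate of `∂_u` by `exp (q(u) D)`
when `D` is locally nilpotent and `q` has coefficients killed by `D`. -/
noncomputable def twistedDer (D : Derivation K B B) (q : B[X]) : Derivation K B[X] B[X] :=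
  derivative'.restrictScalars K - derivative q • extendDer D

theorem twistedDer_X (D : Derivation K B B) (q : B[X]) : twistedDer D q X = 1 := by
  simp [twistedDer, extendDer_X]

theorem twistedDer_C (D : Derivation K B B) (q : B[X]) (b : B) :
    twistedDer D q (C b) = - (derivative q * C (D b)) := by
  simp [twistedDer, extendDer_C]

/-- Elements killed by a power of `E = ∂_u - n u^(n-1) D` form a subalgebra. It contains `u`, and it
contains `B` by induction on the nilpotency order, since `E b = - n u^(n-1) D b`. -/
theorem isLND_twistedDer {D : Derivation K B B} (hD : IsLND D) (n : ℕ) :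
    IsLND (twistedDer D (X ^ n)) := by
  set E := twistedDer D (X ^ n)
  have hX : X ∈ nilSubalgebra E := ⟨2, by simp [E, twistedDer_X]⟩
  have hC : ∀ k : ℕ, ∀ b : B, (⇑D)^[k] b = 0 → C b ∈ nilSubalgebra E := by
    intro k
    induction k with
    | zero => intro b hb; simp_all
    | succ k ih =>
      intro b hb
      apply mem_nilSubalgebra_of_apply_mem
      simp only [E, twistedDer_C, derivative_X_pow]
      refine neg_mem (mul_mem (mul_mem ?_ (pow_mem hX _)) (ih _ hb))
      simp
  apply isLND_of_nilSubalgebra_eq_top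
  rw [eq_top_iff]
  rintro p -
  rw [p.as_sum_range_C_mul_X_pow]
  refine sum_mem fun i _ => mul_mem ?_ (pow_mem hX _)
  obtain ⟨k, -, hk⟩ := hD (p.coeff i)
  exact hC k _ hk

theorem C_mem_HDStar (b : B) : C b ∈ HDStar K B[X] := by
  have h0 : IsLND (0 : Derivation K B B) := fun b => ⟨1, le_rfl, rfl⟩
  exact Algebra.subset_adjoin ⟨_, isLND_twistedDer h0 0, ⟨X, twistedDer_X _ _⟩, by
    simp [twistedDer_C]⟩

/-- If `D² b = 0`, then `b + (D b) u^n` lies in the kernel of `∂_u - n u^(n-1) D`. -/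
theorem C_mul_X_pow_mem_HDStar {D : Derivation K B B} (hD : IsLND D) {b : B}
    (hb : D (D b) = 0) (n : ℕ) : C (D b) * X ^ n ∈ HDStar K B[X] := by
  have h : C b + C (D b) * X ^ n ∈ HDStar K B[X] := by
    refine Algebra.subset_adjoin ⟨_, isLND_twistedDer hD n, ⟨X, twistedDer_X _ _⟩, ?_⟩
    simp only [map_add, Derivation.leibniz, Derivation.leibniz_pow, twistedDer_C, twistedDer_X, hb,
      derivative_X_pow, smul_eq_mul, nsmul_eq_mul, map_zero, map_natCast]
    ring
  simpa using sub_mem h (C_mem_HDStar (K := K) b)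

end Polynomial

/-- The conjugate `φ D φ⁻¹`. -/
noncomputable def conjDer {K A : Type*} [CommRing K] [CommRing A] [Algebra K A] (φ : A ≃ₐ[K] A)
    (D : Derivation K A A) : Derivation K A A :=
  Derivation.mk' (φ.toLinearMap ∘ₗ D.toLinearMap ∘ₗ φ.symm.toLinearMap) fun a b => by
    simp

theorem conjDer_iterate {K A : Type*} [CommRing K] [CommRing A] [Algebra K A] (φ : A ≃ₐ[K] A)
    (D : Derivation K A A) (n : ℕ) (a : A) :
    (⇑(conjDer φ D))^[n] (φ a) = φ ((⇑D)^[n] a) := by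
  induction n generalizing a with
  | zero => rfl
  | succ n ih =>
    rw [Function.iterate_succ_apply, Function.iterate_succ_apply, ← ih]
    exact congrArg _ (show φ (D (φ.symm (φ a))) = φ (D a) by simp)

/-- `HD*(A)` is stable under automorphisms: conjugating an LND with slice gives an LND with slice. -/
theorem map_mem_HDStar {K A : Type*} [CommRing K] [CommRing A] [Algebra K A] (φ : A ≃ₐ[K] A)
    {a : A} (ha : a ∈ HDStar K A) : φ a ∈ HDStar K A := by
  suffices HDStar K A ≤ (HDStar K A).comap φ.toAlgHom from this ha
  refine Algebra.adjoin_le ?_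
  rintro a ⟨D, hD, ⟨s, hs⟩, ha⟩
  refine Algebra.subset_adjoin ⟨conjDer φ D, fun x => ?_, ⟨φ s, ?_⟩, ?_⟩
  · obtain ⟨n, hn, h⟩ := hD (φ.symm x)
    refine ⟨n, hn, ?_⟩
    rw [← φ.apply_symm_apply x, conjDer_iterate, h, map_zero]
  · simpa [hs] using conjDer_iterate φ D 1 s
  · simpa [ha] using conjDer_iterate φ D 1 a

/-- A vector-valued polynomial over an infinite field whose values at all nonzero points lie in a
subspace has its coefficients in that subspace. Linear functionals on the quotient reduce this to
scalar polynomials. -/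
theorem mem_of_forall_sum_pow_smul_mem {K M : Type*} [Field K] [Infinite K] [AddCommGroup M]
    [Module K M] (V : Submodule K M) (m : ℕ → M) (N : ℕ)
    (h : ∀ c : K, c ≠ 0 → ∑ i ∈ Finset.range N, c ^ i • m i ∈ V) {i : ℕ} (hi : i < N) :
    m i ∈ V := by
  rw [← Submodule.Quotient.mk_eq_zero, ← Module.forall_dual_apply_eq_zero_iff K]
  intro f
  -- The hypothesis omits `c = 0`, so it is `X * p` that vanishes at every point.
  set p : K[X] := ∑ j ∈ Finset.range N, monomial j (f (Submodule.Quotient.mk (m j))) with hp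
  have hp0 : X * p = 0 := by
    refine Polynomial.funext fun c => ?_
    rcases eq_or_ne c 0 with rfl | hc
    · simp
    have := (Submodule.Quotient.mk_eq_zero V).2 (h c hc)
    rw [← Submodule.mkQ_apply, map_sum] at this
    have h2 := congrArg f this
    simp only [map_sum, map_smul, Submodule.mkQ_apply, smul_eq_mul, map_zero] at h2
    simp only [hp, eval_mul, eval_X, eval_finsetSum, eval_monomial, eval_zero]
    simp_rw [mul_comm _ (c ^ _), h2, mul_zero]
  have := congrArg (coeff · i) ((mul_eq_zero.1 hp0).resolve_left X_ne_zero)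
  simpa [hp, finsetSum_coeff, coeff_monomial, hi] using this

section Graded

variable {K B : Type*} [Field K] [CharZero K] [CommRing B] [Algebra K B]

/-- `HD*(B[u])` is a graded subalgebra, by stability under the automorphisms `u ↦ c u`. -/
theorem C_coeff_mul_X_pow_mem_HDStar {p : B[X]} (hp : p ∈ HDStar K B[X]) (i : ℕ) :
    C (p.coeff i) * X ^ i ∈ HDStar K B[X] := by
  rcases lt_or_ge p.natDegree i with hi | hi
  · simp [coeff_eq_zero_of_natDegree_lt hi]
  refine mem_of_forall_sum_pow_smul_mem (K := K) (HDStar K B[X]).toSubmodule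
    (fun i => C (p.coeff i) * X ^ i) (p.natDegree + 1) (fun c hc => ?_) (Nat.lt_succ_of_le hi)
  let _ : Invertible (algebraMap K B c) := (invertibleOfNonzero hc).map (algebraMap K B)
  have h := map_mem_HDStar ((algEquivCMulXAddC (algebraMap K B c) 0).restrictScalars K) hp
  rw [Subalgebra.mem_toSubmodule]
  convert h using 1
  conv_rhs => rw [p.as_sum_range_C_mul_X_pow]
  simp [Algebra.smul_def, mul_pow, mul_left_comm]

/-- The coefficient of `c^n` in `a (u + c)^(n+1)` is `(n + 1) a u`, so `a u` lies in `HD*(B[u])` by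
stability under the automorphisms `u ↦ u + c`. -/
theorem C_mul_X_mem_HDStar_of_C_mul_X_pow {a : B} {n : ℕ}
    (h : C a * X ^ (n + 1) ∈ HDStar K B[X]) : C a * X ∈ HDStar K B[X] := by
  have key := mem_of_forall_sum_pow_smul_mem (K := K) (HDStar K B[X]).toSubmodule
    (fun i => C a * X ^ (n + 1 - i) * ((n + 1).choose i : B[X])) (n + 2) (fun c _ => ?_)
    (show n < n + 2 by omega)
  · have h2 := (HDStar K B[X]).smul_mem key ((n + 1 : K)⁻¹)
    have h3 : ((n + 1 : ℕ) : B[X]) = algebraMap K B[X] (n + 1 : K) := by simp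
    have h4 : (n + 1 : K) ≠ 0 := by exact_mod_cast n.succ_ne_zero
    simp only [Nat.choose_succ_self_right, Nat.add_sub_cancel_left, pow_one] at h2
    rwa [h3, mul_comm, ← Algebra.smul_def, smul_smul, inv_mul_cancel₀ h4, one_smul] at h2
  · have h2 := map_mem_HDStar ((algEquivAevalXAddC (algebraMap K B c)).restrictScalars K) h
    rw [Subalgebra.mem_toSubmodule]
    convert h2 using 1
    simp [add_comm X, add_pow, Finset.mul_sum, Algebra.smul_def]
    refine Finset.sum_congr rfl fun i _ => by ring

end Graded

/-- A nonzero LND has a local slice. -/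
theorem exists_apply_ne_zero_apply_apply_eq_zero {K B : Type*} [CommRing K] [CommRing B]
    [Algebra K B] {D : Derivation K B B} (hD : IsLND D) (h0 : D ≠ 0) :
    ∃ b, D b ≠ 0 ∧ D (D b) = 0 := by
  classical
  obtain ⟨c, hc⟩ : ∃ c, D c ≠ 0 := by
    by_contra! h
    exact h0 (Derivation.ext h)
  have hex : ∃ n, (⇑D)^[n] (D c) = 0 := (hD (D c)).imp fun n h => h.2
  obtain ⟨n, hn⟩ : ∃ n, Nat.find hex = n + 1 := Nat.exists_eq_succ_of_ne_zero fun h =>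
    hc (by simpa [h] using Nat.find_spec hex)
  refine ⟨(⇑D)^[n] c, ?_, ?_⟩
  · rw [← Function.iterate_succ_apply' (⇑D), Function.iterate_succ_apply]
    exact Nat.find_min hex (by omega)
  · have := Nat.find_spec hex
    rwa [hn, Function.iterate_succ_apply', ← Function.iterate_succ_apply (⇑D),
      Function.iterate_succ_apply'] at this

/-- The coefficient of `u^n` in a monic equation of degree `n` for `u` shows that `1` belongs to the
ideal of those `a ∈ B` with `a u ∈ HD*(B[u])`. -/
theorem X_mem_HDStar_of_isIntegral {K B : Type*} [Field K] [CharZero K] [CommRing B] [IsDomain B]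
    [Algebra K B] (h : IsIntegral (HDStar K B[X]) (X : B[X])) : X ∈ HDStar K B[X] := by
  obtain ⟨p, hp, hpX⟩ := h
  set n := p.natDegree with hn
  rw [← aeval_def, aeval_eq_sum_range, Finset.sum_range_succ, ← hn, hn, hp.coeff_natDegree,
    one_smul, ← hn] at hpX
  have h1 := congrArg (coeff · n) hpX
  simp only [coeff_add, finsetSum_coeff, coeff_X_pow_self, coeff_zero, Subalgebra.smul_def,
    smul_eq_mul, coeff_mul_X_pow'] at h1
  have h2 : (1 : B) = -∑ i ∈ Finset.range n,
      if i ≤ n then ((p.coeff i : HDStar K B[X]) : B[X]).coeff (n - i) else 0 := by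
    linear_combination h1
  have h3 : C (1 : B) * X ∈ HDStar K B[X] := by
    rw [h2, map_neg, map_sum, neg_mul, Finset.sum_mul]
    refine neg_mem (sum_mem fun i hi => ?_)
    have hi := Finset.mem_range.1 hi
    obtain ⟨k, hk⟩ : ∃ k, n - i = k + 1 := ⟨n - i - 1, by omega⟩
    rw [if_pos hi.le, hk]
    exact C_mul_X_mem_HDStar_of_C_mul_X_pow (C_coeff_mul_X_pow_mem_HDStar (p.coeff i).2 (k + 1))
  simpa using h3

theorem stmt0 {K B : Type*} [Field K] [IsAlgClosed K] [CharZero K]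
    [CommRing B] [IsDomain B] [Algebra K B] [Algebra.FiniteType K B]
    (hLND : ∃ D : Derivation K B B, IsLND D ∧ D ≠ 0)
    (hne : HDStar K (Polynomial B) ≠ ⊤) :
    ¬ (HDStar K (Polynomial B)).FG := by
  intro hFG
  obtain ⟨D, hD, h0⟩ := hLND
  obtain ⟨b, hb, hbb⟩ := exists_apply_ne_zero_apply_apply_eq_zero hD h0
  have : Algebra.FiniteType K (HDStar K B[X]) := (HDStar K B[X]).fg_iff_finiteType.1 hFG
  have : IsNoetherianRing (HDStar K B[X]) := Algebra.FiniteType.isNoetherianRing K _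
  have hX : IsAlmostIntegral (HDStar K B[X]) (X : B[X]) := by
    refine ⟨⟨C (D b), C_mem_HDStar _⟩, mem_nonZeroDivisors_of_ne_zero fun h => hb ?_, fun n => ?_⟩
    · simpa using congrArg Subtype.val h
    · exact ⟨⟨_, C_mul_X_pow_mem_HDStar hD hbb n⟩, rfl⟩
  have hX' := X_mem_HDStar_of_isIntegral hX.isIntegral
  refine hne (eq_top_iff.2 ?_)
  rintro p -
  rw [p.as_sum_range_C_mul_X_pow]
  exact sum_mem fun i _ => mul_mem (C_mem_HDStar _) (pow_mem hX' _)
end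

section
/- Let K be an algebraically closed field of characteristic zero and let B and C be finitely generated commutative K-algebras that are integral domains. If there is a K-algebra isomorphism B[u] ≅ C[u], then: HD*(B[u]) = B[u] if and only if HD*(C[u]) = C[u]; HD*(B[u]) is a finitely generated K-algebra if and only if HD*(C[u]) is; and B is rigid if and only if C is rigid. -/
open Polynomial

/-! ### Transport along an isomorphism -/

section Transport

variable {K A A' : Type*} [CommRing K] [CommRing A] [Algebra K A] [CommRing A'] [Algebra K A']

/-- The derivation `e ∘ D ∘ e⁻¹` of `A'` obtained from a derivation `D` of `A` and an isomorphism
`e : A ≃ₐ[K] A'`. -/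
def Derivation.conjAlgEquiv (e : A ≃ₐ[K] A') (D : Derivation K A A) : Derivation K A' A' :=
  Derivation.mk' (e.toLinearMap ∘ₗ D.toLinearMap ∘ₗ e.symm.toLinearMap) fun a b => by
    simp [Derivation.leibniz]

theorem Derivation.conjAlgEquiv_apply (e : A ≃ₐ[K] A') (D : Derivation K A A) (a : A') :
    D.conjAlgEquiv e a = e (D (e.symm a)) := rfl

theorem Derivation.conjAlgEquiv_iterate (e : A ≃ₐ[K] A') (D : Derivation K A A) (n : ℕ) (a : A') :
    (⇑(D.conjAlgEquiv e))^[n] a = e ((⇑D)^[n] (e.symm a)) := by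
  induction n with
  | zero => simp
  | succ n ih => simp [Function.iterate_succ_apply', ih, Derivation.conjAlgEquiv_apply]

theorem IsLND.conjAlgEquiv (e : A ≃ₐ[K] A') {D : Derivation K A A} (hD : IsLND D) :
    IsLND (D.conjAlgEquiv e) := fun a => by
  obtain ⟨n, hn, h⟩ := hD (e.symm a)
  exact ⟨n, hn, by rw [Derivation.conjAlgEquiv_iterate, h, map_zero]⟩

theorem HDStar_map_le (e : A ≃ₐ[K] A') : (HDStar K A).map (e : A →ₐ[K] A') ≤ HDStar K A' := by
  unfold HDStar
  rw [← Algebra.adjoin_image]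
  apply Algebra.adjoin_mono
  rintro _ ⟨a, ⟨D, hD, ⟨s, hs⟩, ha⟩, rfl⟩
  refine ⟨D.conjAlgEquiv e, hD.conjAlgEquiv e, ⟨e s, ?_⟩, ?_⟩
  · simp [Derivation.conjAlgEquiv_apply, hs]
  · simp [Derivation.conjAlgEquiv_apply, ha]

theorem HDStar_map (e : A ≃ₐ[K] A') : (HDStar K A).map (e : A →ₐ[K] A') = HDStar K A' := by
  refine le_antisymm (HDStar_map_le e) fun x hx => ?_
  exact ⟨e.symm x, HDStar_map_le e.symm ⟨x, hx, rfl⟩, by simp⟩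

theorem HDStar_eq_top_of_algEquiv (e : A ≃ₐ[K] A') (h : HDStar K A = ⊤) : HDStar K A' = ⊤ := by
  rw [← HDStar_map e, h, Algebra.map_top, AlgHom.range_eq_top]
  exact e.surjective

theorem HDStar_fg_of_algEquiv (e : A ≃ₐ[K] A') (h : (HDStar K A).FG) : (HDStar K A').FG := by
  rw [← HDStar_map e]
  exact h.map _

theorem rigid_of_algEquiv (e : A ≃ₐ[K] A') (h : ∀ D : Derivation K A A, IsLND D → D = 0)
    (D : Derivation K A' A') (hD : IsLND D) : D = 0 := by
  have h0 := h _ (hD.conjAlgEquiv e.symm)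
  ext a
  have h1 := DFunLike.congr_fun h0 (e.symm a)
  simpa [Derivation.conjAlgEquiv_apply] using h1

end Transport

/-! ### Locally nilpotent derivations of a domain -/

section LND

variable {K A : Type*} [CommRing K] [CommRing A] [Algebra K A]

/-- The extreme case of the iterated Leibniz rule, in which a single term survives. -/
theorem Derivation.iterate_mul_of_eq_zero (D : Derivation K A A) (N : ℕ) :
    ∀ (n m : ℕ) (f g : A), n + m = N → (⇑D)^[n + 1] f = 0 → (⇑D)^[m + 1] g = 0 →
      (⇑D)^[N] (f * g) = (N.choose n : A) * ((⇑D)^[n] f * (⇑D)^[m] g) := by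
  induction N with
  | zero =>
    intro n m f g h hf hg
    obtain ⟨rfl, rfl⟩ : n = 0 ∧ m = 0 := by omega
    simp
  | succ N ih =>
    intro n m f g h hf hg
    rw [Function.iterate_succ_apply, D.leibniz, smul_eq_mul, smul_eq_mul, iterate_map_add,
      mul_comm g]
    rcases n with _ | n
    · obtain rfl : m = N + 1 := by omega
      have hf' : D f = 0 := by simpa using hf
      rw [hf', zero_mul, iterate_map_zero, add_zero, ih 0 N f (D g) (by omega) hf (by simpa using hg)]
      simp
    · rcases m with _ | m
      · obtain rfl : n = N := by omega
        have hg' : D g = 0 := by simpa using hg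
        rw [hg', mul_zero, iterate_map_zero, zero_add,
          ih n 0 (D f) g (by omega) (by simpa using hf) hg]
        simp
      · rw [ih (n + 1) m f (D g) (by omega) hf (by simpa using hg),
          ih n (m + 1) (D f) g (by omega) (by simpa using hf) hg, Nat.choose_succ_succ]
        simp only [Function.iterate_succ_apply]
        push_cast
        ring

theorem IsLND.exists_index {D : Derivation K A A} (hD : IsLND D) {f : A} (hf : f ≠ 0) :
    ∃ n, (⇑D)^[n] f ≠ 0 ∧ (⇑D)^[n + 1] f = 0 := by
  classical
  have hex : ∃ n, (⇑D)^[n] f = 0 := (hD f).imp fun n h => h.2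
  have hpos : Nat.find hex ≠ 0 := fun h0 => hf (by simpa [h0] using Nat.find_spec hex)
  obtain ⟨n, hn⟩ := Nat.exists_eq_succ_of_ne_zero hpos
  exact ⟨n, Nat.find_min hex (by omega), by simpa [hn] using Nat.find_spec hex⟩

/-- Counting how many times `D` can be applied before reaching zero is additive on products, while
applying `D` lowers the count by one; so `D f` cannot be a nonzero multiple of `f`. -/
theorem IsLND.eq_zero_of_dvd [IsDomain A] [CharZero A] {D : Derivation K A A} (hD : IsLND D)
    {f : A} (h : f ∣ D f) : D f = 0 := by
  obtain ⟨g, hg⟩ := h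
  by_contra hne
  have hf : f ≠ 0 := by rintro rfl; simp at hne
  have hg0 : g ≠ 0 := by rintro rfl; simp [hg] at hne
  obtain ⟨n, hn, hn'⟩ := hD.exists_index hf
  obtain ⟨m, hm, hm'⟩ := hD.exists_index hg0
  have h1 := D.iterate_mul_of_eq_zero (n + m) n m f g rfl hn' hm'
  have h2 : (⇑D)^[n + m] (f * g) = 0 := by
    rw [← hg, ← Function.iterate_succ_apply, show (n + m).succ = m + (n + 1) by omega,
      Function.iterate_add_apply, hn', iterate_map_zero]
  rw [h2] at h1
  have h3 : ((n + m).choose n : A) ≠ 0 :=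
    Nat.cast_ne_zero.2 (Nat.choose_pos (Nat.le_add_right n m)).ne'
  exact mul_ne_zero h3 (mul_ne_zero hn hm) h1.symm

end LND

/-! ### The top homogeneous part of a derivation of a polynomial ring -/

section TopPart

variable {K B : Type*} [CommRing K] [CommRing B] [Algebra K B]

/-- `D` raises the `X`-degree of polynomials by at most `d`, stated on the generators `B` and `X` of
`B[X]`. -/
def DegreeBound (D : Derivation K B[X] B[X]) (d : ℕ) : Prop :=
  (∀ b : B, (D (C b)).natDegree ≤ d) ∧ (D X).natDegree ≤ d + 1

theorem exists_degreeBound [Algebra.FiniteType K B] (D : Derivation K B[X] B[X]) :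
    ∃ d, DegreeBound D d := by
  obtain ⟨s, hs⟩ := (Algebra.FiniteType.out : (⊤ : Subalgebra K B).FG)
  refine ⟨s.sup (fun b => (D (C b)).natDegree) + (D X).natDegree, fun b => ?_, by omega⟩
  refine le_trans ?_ (Nat.le_add_right _ _)
  have hb : b ∈ Algebra.adjoin K (s : Set B) := by rw [hs]; trivial
  induction hb using Algebra.adjoin_induction with
  | mem x hx => exact Finset.le_sup (f := fun b => (D (C b)).natDegree) hx
  | algebraMap r =>
    have : (C (algebraMap K B r) : B[X]) = algebraMap K B[X] r := rfl
    rw [this, D.map_algebraMap, natDegree_zero]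
    exact Nat.zero_le _
  | add x y _ _ hx hy =>
    rw [C_add, map_add]
    exact natDegree_add_le_of_degree_le hx hy
  | mul x y _ _ hx hy =>
    rw [C_mul, D.leibniz, smul_eq_mul, smul_eq_mul]
    exact natDegree_add_le_of_degree_le ((natDegree_C_mul_le _ _).trans hy)
      ((natDegree_C_mul_le _ _).trans hx)

/-- The derivation `b ↦ coeff (D b) d` of `B`. -/
noncomputable def topCoeff (D : Derivation K B[X] B[X]) (d : ℕ) : Derivation K B B :=
  Derivation.mk'
    { toFun := fun b => (D (C b)).coeff d
      map_add' := fun x y => by simp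
      map_smul' := fun r x => by
        rw [← smul_C, D.map_smul, coeff_smul, RingHom.id_apply] }
    fun a b => by simp [Derivation.leibniz]

theorem topCoeff_apply (D : Derivation K B[X] B[X]) (d : ℕ) (b : B) :
    topCoeff D d b = (D (C b)).coeff d := rfl

/-- The derivation of `B[X]` extending a derivation of `B` coefficientwise, so that `X ↦ 0`. -/
noncomputable def coeffDerivation (δ : Derivation K B B) : Derivation K B[X] B[X] :=
  Derivation.mk'
    { toFun := fun f => f.sum fun n b => monomial n (δ b)
      map_add' := fun f g => sum_add_index f g _ (by simp) (by simp)
      map_smul' := fun r f => by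
        ext n
        simp only [sum_def, coeff_smul, finsetSum_coeff, coeff_monomial, Finset.sum_ite_eq',
          RingHom.id_apply, smul_ite, smul_zero, mem_support_iff, ← δ.map_smul]
        split_ifs <;> simp_all }
    fun f g => by
      simp only [LinearMap.coe_mk, AddHom.coe_mk]
      induction f using Polynomial.induction_on' with
      | add p q hp hq =>
        rw [add_mul, sum_add_index _ _ _ (by simp) (by simp), hp, hq,
          sum_add_index p q _ (by simp) (by simp), smul_add, add_smul]
        abel
      | monomial n a =>
        induction g using Polynomial.induction_on' with
        | add p q hp hq =>
          rw [mul_add, sum_add_index _ _ _ (by simp) (by simp), hp, hq,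
            sum_add_index p q _ (by simp) (by simp), smul_add, add_smul]
          abel
        | monomial m b =>
          simp [monomial_mul_monomial, sum_monomial_index, Derivation.leibniz, add_comm m n]

theorem coeffDerivation_monomial (δ : Derivation K B B) (n : ℕ) (b : B) :
    coeffDerivation δ (monomial n b) = monomial n (δ b) :=
  sum_monomial_index (n := n) b (fun n b => monomial n (δ b)) (by simp)

/-- The homogeneous part of degree `d` of `D`, i.e. `X ^ d * δ + c * X ^ (d + 1) * ∂/∂X` with
`δ b = coeff (D b) d` and `c = coeff (D X) (d + 1)`. -/
noncomputable def topPart (D : Derivation K B[X] B[X]) (d : ℕ) : Derivation K B[X] B[X] :=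
  (X ^ d : B[X]) • coeffDerivation (topCoeff D d) +
    (C ((D X).coeff (d + 1)) * X ^ (d + 1)) • (derivative' (R := B)).restrictScalars K

theorem topPart_monomial (D : Derivation K B[X] B[X]) (d n : ℕ) (b : B) :
    topPart D d (monomial n b) =
      monomial (n + d) (topCoeff D d b + n * b * (D X).coeff (d + 1)) := by
  have h1 : topPart D d (monomial n b) = X ^ d * monomial n (topCoeff D d b) +
      C ((D X).coeff (d + 1)) * X ^ (d + 1) * derivative (monomial n b) := by
    rw [← coeffDerivation_monomial]
    rfl
  rw [h1, derivative_monomial, C_mul_X_pow_eq_monomial, X_pow_mul_monomial, monomial_mul_monomial,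
    map_add, add_right_inj]
  rcases n with _ | n
  · simp
  · rw [show d + 1 + (n + 1 - 1) = n + 1 + d by omega]
    congr 1
    ring

theorem coeff_map_monomial {D : Derivation K B[X] B[X]} {d : ℕ} (h : DegreeBound D d)
    (n : ℕ) (b : B) : (D (monomial n b)).natDegree ≤ n + d ∧
      (D (monomial n b)).coeff (n + d) = topCoeff D d b + n * b * (D X).coeff (d + 1) := by
  have h1 : D (monomial n b) = D (C b) * X ^ n + C (n * b) * (X ^ (n - 1) * D X) := by
    rw [← C_mul_X_pow_eq_monomial, D.leibniz, D.leibniz_pow]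
    simp only [smul_eq_mul, nsmul_eq_mul, C_mul, map_natCast]
    ring
  rw [h1]
  constructor
  · refine natDegree_add_le_of_degree_le ?_ ?_
    · exact (natDegree_mul_le_of_le (h.1 b) (natDegree_X_pow_le n)).trans_eq (add_comm _ _)
    · rcases n with _ | n
      · simp
      · refine (natDegree_C_mul_le _ _).trans ?_
        refine (natDegree_mul_le_of_le (natDegree_X_pow_le _) h.2).trans ?_
        omega
  · rw [coeff_add, coeff_C_mul, add_comm n d, coeff_mul_X_pow, topCoeff_apply, add_right_inj]
    rcases n with _ | n
    · simp
    · rw [show d + (n + 1) = d + 1 + (n + 1 - 1) by omega, coeff_X_pow_mul]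

/-- On polynomials of degree at most `n`, the map `D` induces `topPart D d` on the coefficients in
degrees `n` and `n + d`. -/
theorem natDegree_map_le_and_monomial {D : Derivation K B[X] B[X]} {d : ℕ} (h : DegreeBound D d)
    {n : ℕ} {f : B[X]} (hf : f.natDegree ≤ n) : (D f).natDegree ≤ n + d ∧
      monomial (n + d) ((D f).coeff (n + d)) = topPart D d (monomial n (f.coeff n)) := by
  have h1 : D f = ∑ i ∈ Finset.range (n + 1), D (monomial i (f.coeff i)) := by
    conv_lhs => rw [f.as_sum_range' (n + 1) (by omega), map_sum]
  have hi := fun i => coeff_map_monomial h i (f.coeff i)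
  constructor
  · rw [h1]
    refine natDegree_sum_le_of_forall_le _ _ fun i hin => (hi i).1.trans ?_
    have := Finset.mem_range.1 hin
    omega
  · rw [topPart_monomial, ← (hi n).2, h1, finsetSum_coeff, Finset.sum_range_succ,
      Finset.sum_eq_zero, zero_add]
    intro i hin
    have := Finset.mem_range.1 hin
    exact coeff_eq_zero_of_natDegree_lt ((hi i).1.trans_lt (by omega))

theorem monomial_coeff_iterate {D : Derivation K B[X] B[X]} {d : ℕ} (h : DegreeBound D d)
    {n : ℕ} {f : B[X]} (hf : f.natDegree ≤ n) (k : ℕ) :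
    ((⇑D)^[k] f).natDegree ≤ n + k * d ∧
      monomial (n + k * d) (((⇑D)^[k] f).coeff (n + k * d)) =
        (⇑(topPart D d))^[k] (monomial n (f.coeff n)) := by
  induction k with
  | zero => simpa using hf
  | succ k ih =>
    have h1 := natDegree_map_le_and_monomial h ih.1
    rw [Function.iterate_succ_apply', Function.iterate_succ_apply', ← ih.2, ← h1.2,
      show n + (k + 1) * d = n + k * d + d by ring]
    exact ⟨h1.1, rfl⟩

/-- On a monomial, iterates of `topPart D d` read off one coefficient of the iterates of `D`. -/
theorem IsLND.topPart {D : Derivation K B[X] B[X]} (hD : IsLND D) {d : ℕ} (h : DegreeBound D d) :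
    IsLND (topPart D d) := fun f => by
  induction f using Polynomial.induction_on' with
  | add p q hp hq =>
    obtain ⟨n, hn, hp⟩ := hp
    obtain ⟨m, hm, hq⟩ := hq
    refine ⟨n + m, by omega, ?_⟩
    rw [iterate_map_add, Function.iterate_add_apply _ n m q, hq, add_comm n m,
      Function.iterate_add_apply, hp, iterate_map_zero, iterate_map_zero, add_zero]
  | monomial n b =>
    obtain ⟨k, hk, h0⟩ := hD (monomial n b)
    have h1 := (monomial_coeff_iterate h (natDegree_monomial_le b (m := n)) k).2
    rw [h0, coeff_zero, monomial_zero_right, coeff_monomial_same] at h1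
    exact ⟨k, hk, h1.symm⟩

theorem topPart_eq_zero [IsDomain B] [CharZero B]
    (hB : ∀ δ : Derivation K B B, IsLND δ → δ = 0)
    {D : Derivation K B[X] B[X]} (hD : IsLND D) {d : ℕ} (h : DegreeBound D d) :
    topCoeff D d = 0 ∧ (D X).coeff (d + 1) = 0 := by
  have hE := hD.topPart h
  have hc : (D X).coeff (d + 1) = 0 := by
    have h1 : topPart D d X = monomial (1 + d) ((D X).coeff (d + 1)) := by
      rw [← monomial_one_one_eq_X, topPart_monomial, monomial_one_one_eq_X]
      simp
    have h2 : topPart D d X = 0 := hE.eq_zero_of_dvd <| by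
      rw [h1, ← C_mul_X_pow_eq_monomial, pow_add, pow_one, mul_left_comm]
      exact dvd_mul_right _ _
    exact (monomial_eq_zero_iff _ _).1 (h1.symm.trans h2)
  refine ⟨hB _ fun b => ?_, hc⟩
  have hit : ∀ k, (⇑(topPart D d))^[k] (monomial 0 b) =
      monomial (k * d) ((⇑(topCoeff D d))^[k] b) := by
    intro k
    induction k with
    | zero => simp
    | succ k ih =>
      rw [Function.iterate_succ_apply', Function.iterate_succ_apply', ih, topPart_monomial, hc,
        mul_zero, add_zero, show (k + 1) * d = k * d + d by ring]
  obtain ⟨k, hk, h0⟩ := hE (monomial 0 b)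
  rw [hit] at h0
  exact ⟨k, hk, (monomial_eq_zero_iff _ _).1 h0⟩

/-- A rigid finitely generated domain is killed by every LND of its polynomial ring. -/
theorem IsLND.map_C_eq_zero [IsDomain B] [CharZero B] [Algebra.FiniteType K B]
    (hB : ∀ δ : Derivation K B B, IsLND δ → δ = 0)
    {D : Derivation K B[X] B[X]} (hD : IsLND D) (b : B) : D (C b) = 0 := by
  have descent : ∀ d, DegreeBound D d → DegreeBound D 0 := by
    intro d
    induction d with
    | zero => exact id
    | succ d ih =>
      intro h
      obtain ⟨h1, h2⟩ := topPart_eq_zero hB hD h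
      refine ih ⟨fun b => ?_, ?_⟩
      · have h3 : (D (C b)).coeff (d + 1) = 0 := by
          rw [← topCoeff_apply, h1, Derivation.zero_apply]
        exact natDegree_le_pred (h.1 b) h3
      · exact natDegree_le_pred h.2 h2
  obtain ⟨d, hd⟩ := exists_degreeBound D
  have h := descent d hd
  have h3 : (D (C b)).coeff 0 = 0 := by
    rw [← topCoeff_apply, (topPart_eq_zero hB hD h).1, Derivation.zero_apply]
  rw [eq_C_of_natDegree_le_zero (h.1 b), h3, C_0]

end TopPart

/-! ### Cancellation for rigid domains -/

section Cancellation

theorem isLND_derivative (K A : Type*) [CommRing K] [CommRing A] [Algebra K A] :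
    IsLND ((derivative' (R := A)).restrictScalars K) := fun f =>
  ⟨f.natDegree + 1, by omega, iterate_derivative_eq_zero (Nat.lt_succ_self _)⟩

variable {K B C : Type*} [Field K] [CharZero K]
    [CommRing B] [IsDomain B] [Algebra K B] [Algebra.FiniteType K B]
    [CommRing C] [IsDomain C] [Algebra K C]

theorem nonempty_algEquiv_of_rigid (e : B[X] ≃ₐ[K] C[X])
    (hB : ∀ D : Derivation K B B, IsLND D → D = 0) : Nonempty (B ≃ₐ[K] C) := by
  have : CharZero B := charZero_of_injective_algebraMap (algebraMap K B).injective
  have : CharZero C := charZero_of_injective_algebraMap (algebraMap K C).injective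
  let φ : B →ₐ[K] C :=
    ((aeval (0 : C)).restrictScalars K).comp ((e : B[X] →ₐ[K] C[X]).comp (CAlgHom (R := K)))
  have hφ : ∀ b, e (Polynomial.C b) = Polynomial.C (φ b) := by
    intro b
    have h1 := ((isLND_derivative K C).conjAlgEquiv e.symm).map_C_eq_zero hB b
    rw [Derivation.conjAlgEquiv_apply, map_eq_zero_iff _ e.symm.injective] at h1
    have h2 : derivative (e (Polynomial.C b)) = 0 := h1
    rw [eq_C_of_derivative_eq_zero h2]
    congr 1
    simp [φ, coeff_zero_eq_aeval_zero]
  have hinj : Function.Injective φ := fun a b hab =>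
    C_injective (e.injective (by rw [hφ, hφ, hab]))
  have he : ∀ p : B[X], e p = (p.map (φ : B →+* C)).comp (e X) := by
    intro p
    induction p using Polynomial.induction_on' with
    | add p q hp hq => simp [hp, hq]
    | monomial n b => simp [← C_mul_X_pow_eq_monomial, hφ]
  have hdeg : ∀ p : B[X], (e p).natDegree = p.natDegree * (e X).natDegree := by
    intro p
    rw [he, natDegree_comp]
    congr 1
    exact natDegree_map_eq_of_injective hinj p
  have hw : (e X).natDegree ≠ 0 := by
    intro h0
    have h1 := hdeg (e.symm X)
    rw [h0, mul_zero, e.apply_symm_apply, natDegree_X] at h1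
    exact one_ne_zero h1
  refine ⟨AlgEquiv.ofBijective φ ⟨hinj, fun c => ?_⟩⟩
  have h1 := hdeg (e.symm (Polynomial.C c))
  rw [e.apply_symm_apply, natDegree_C, eq_comm, mul_eq_zero, or_iff_left hw] at h1
  refine ⟨(e.symm (Polynomial.C c)).coeff 0, C_injective ?_⟩
  rw [← hφ, ← eq_C_of_natDegree_eq_zero h1, e.apply_symm_apply]

end Cancellation

theorem stmt2 {K B C : Type*} [Field K] [IsAlgClosed K] [CharZero K]
    [CommRing B] [IsDomain B] [Algebra K B] [Algebra.FiniteType K B]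
    [CommRing C] [IsDomain C] [Algebra K C] [Algebra.FiniteType K C]
    (e : Polynomial B ≃ₐ[K] Polynomial C) :
    (HDStar K (Polynomial B) = ⊤ ↔ HDStar K (Polynomial C) = ⊤) ∧
    ((HDStar K (Polynomial B)).FG ↔ (HDStar K (Polynomial C)).FG) ∧
    ((∀ D : Derivation K B B, IsLND D → D = 0) ↔
      (∀ D : Derivation K C C, IsLND D → D = 0)) := by
  refine ⟨⟨HDStar_eq_top_of_algEquiv e, HDStar_eq_top_of_algEquiv e.symm⟩,
    ⟨HDStar_fg_of_algEquiv e, HDStar_fg_of_algEquiv e.symm⟩, fun h => ?_, fun h => ?_⟩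
  · obtain ⟨f⟩ := nonempty_algEquiv_of_rigid e h
    exact rigid_of_algEquiv f h
  · obtain ⟨f⟩ := nonempty_algEquiv_of_rigid e.symm h
    exact rigid_of_algEquiv f h
end
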